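/- Let A be a commutative ring, B an A-algebra, M a B-module, and B' a B-algebra of finite presentation that is faithfully flat over B. If M ⊗_B B', viewed as a B'-module, is intrinsically of finite presentation over A, then M is intrinsically of finite presentation over A. -/

import Mathlib

/-- An `S`-module `N` is *intrinsically of finite presentation* over `R` if there exist an
`n : ℕ` and an `R`-algebra homomorphism `f : R[x₁, …, xₙ] → S` from a polynomial ring over `R`
such that `N`, viewed as an `R[x₁, …, xₙ]`-module via restriction of scalars along `f`, is
finitely presented. -/
def Module.IntrinsicallyFinitePresentation (R S N : Type*) [CommRing R] [CommRing S]
    [Algebra R S] [AddCommGroup N] [Module S N] : Prop :=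
  ∃ (n : ℕ) (f : MvPolynomial (Fin n) R →ₐ[R] S),
    letI : Module (MvPolynomial (Fin n) R) N := Module.compHom N f.toRingHom
    Module.FinitePresentation (MvPolynomial (Fin n) R) N

open TensorProduct

/-! If `B → B'` were the base change of a faithfully flat map `D → T` of finite type along `D → B`,
with `D` of finite presentation over `A` and with `T` containing the images in `B'` of the
variables of `A[x₁, …, xₙ]`, then `B' ⊗[B] M = T ⊗[D] M` would be finitely presented over `T`,
hence `M` over `D` by faithfully flat descent, and a presentation of `D` over `A` would conclude.

Write `B'` as `B ⊗[R] S` with `R` and `S` of finite type over `ℤ`. One takes `D = A ⊗[ℤ] C` for a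
large enough finitely generated `R`-subalgebra `C` of `B`, once `C ⊗[R] S` is known to be
faithfully flat over every large enough `C`. Flatness at the primes over `I ⊆ R` is shown by
Noetherian induction on `I`: for `I` prime, `S ⧸ I S` is flat over `R ⧸ I` away from some `f ∉ I`,
and the finitely generated kernel of `I ⊗ S → S` dies in `I C ⊗ S`, since it dies in `I B ⊗ S`;
then the local criterion of flatness applies away from `f`. Surjectivity on spectra descends because
the image of a flat map of finite presentation is open. -/

open Function

universe u

section Localization

variable {R T N N' X Y : Type*} [CommRing R] [CommRing T] [Algebra R T]
  [AddCommGroup N] [Module R N] [Module T N] [IsScalarTower R T N]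
  [AddCommGroup N'] [Module R N'] [Module T N'] [IsScalarTower R T N']
  [AddCommGroup X] [Module R X] [AddCommGroup Y] [Module R Y]

lemma lTensor_injective_iff_of_isLocalizedModule (p : Submonoid T) (ι : N →ₗ[T] N')
    [IsLocalizedModule p ι] (g : X →ₗ[R] Y) :
    Injective (g.lTensor N') ↔
      ∀ z : N ⊗[R] X, g.lTensor N z = 0 → ∃ s ∈ p, s • z = 0 := by
  let ιX := AlgebraTensorModule.rTensor R X ι
  let ιY := AlgebraTensorModule.rTensor R Y ι
  have hmap (z : N ⊗[R] X) : g.lTensor N' (ιX z) = ιY (g.lTensor N z) := by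
    rw [← AlgebraTensorModule.coe_lTensor (A := T),
      ← IsLocalizedModule.map_lTensor (f := g) (g := ι) (S := p), IsLocalizedModule.map_apply]
    rfl
  constructor
  · intro hg z hz
    have : ιX z = 0 := hg (by rw [hmap, hz, map_zero, map_zero])
    obtain ⟨s, hs⟩ := (IsLocalizedModule.eq_zero_iff p ιX).1 this
    exact ⟨s, s.2, hs⟩
  · refine fun h ↦ (injective_iff_map_eq_zero _).2 fun w hw ↦ ?_
    obtain ⟨⟨z, s⟩, hz : s • w = ιX z⟩ := IsLocalizedModule.surj p ιX w
    have hs : ιY (g.lTensor N z) = 0 := by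
      rw [← hmap, ← hz, ← AlgebraTensorModule.coe_lTensor (A := T), Submonoid.smul_def, map_smul,
        AlgebraTensorModule.coe_lTensor, hw, smul_zero]
    obtain ⟨t, ht⟩ := (IsLocalizedModule.eq_zero_iff p ιY).1 hs
    obtain ⟨r, hr, hrz⟩ := h ((t : T) • z) (by
      rw [← AlgebraTensorModule.coe_lTensor (A := T), map_smul, AlgebraTensorModule.coe_lTensor]
      exact ht)
    refine IsLocalizedModule.smul_injective ιX (⟨r, hr⟩ * t * s) ?_
    dsimp only
    rw [smul_zero, mul_smul, hz, mul_smul]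
    change r • (t : T) • ιX z = 0
    rw [← map_smul, ← map_smul, hrz, map_zero]

end Localization

section Flat

variable {R N N' N'' : Type*} [CommRing R] [AddCommGroup N] [Module R N] [AddCommGroup N']
  [Module R N'] [AddCommGroup N''] [Module R N'']

lemma flat_of_exact [Module.Flat R N'] [Module.Flat R N''] {i : N' →ₗ[R] N} {p : N →ₗ[R] N''}
    (hi : Injective i) (hip : Exact i p) (hp : Surjective p) : Module.Flat R N := by
  refine Module.Flat.iff_lTensor_injective'.2 fun J ↦ (injective_iff_map_eq_zero _).2 fun z hz ↦ ?_
  have hpz : p.rTensor J z = 0 := by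
    refine Module.Flat.lTensor_preserves_injective_linearMap (M := N'') J.subtype
      J.injective_subtype ?_
    rw [← LinearMap.comp_apply, LinearMap.lTensor_comp_rTensor, ← LinearMap.rTensor_comp_lTensor,
      LinearMap.comp_apply, hz, map_zero, map_zero]
  obtain ⟨w, rfl⟩ := (rTensor_exact J hip hp z).1 hpz
  rw [← LinearMap.comp_apply, LinearMap.lTensor_comp_rTensor, ← LinearMap.rTensor_comp_lTensor,
    LinearMap.comp_apply] at hz
  have hw : J.subtype.lTensor N' w = 0 :=
    Module.Flat.rTensor_preserves_injective_linearMap (M := R) i hi (by rw [hz, map_zero])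
  rw [Module.Flat.lTensor_preserves_injective_linearMap (M := N') J.subtype J.injective_subtype
    (hw.trans (map_zero _).symm), map_zero]

end Flat

/-- The `R`-module `N` is flat over the open subset of `Spec R` where `f` does not vanish. -/
def IsFlatAway {R : Type*} [CommRing R] (f : R) (N : Type*) [AddCommGroup N] [Module R N] : Prop :=
  Module.Flat R (LocalizedModule (.powers f) N)

namespace IsFlatAway

variable {R N N' N'' : Type*} [CommRing R] [AddCommGroup N] [Module R N] [AddCommGroup N']
  [Module R N'] [AddCommGroup N''] [Module R N''] {f g : R}

lemma exists_pow_smul_eq_zero (h : IsFlatAway f N) {X Y : Type*} [AddCommGroup X] [Module R X]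
    [AddCommGroup Y] [Module R Y] {g : X →ₗ[R] Y} (hg : Injective g) {z : N ⊗[R] X}
    (hz : g.lTensor N z = 0) : ∃ n : ℕ, f ^ n • z = 0 := by
  have : Module.Flat R (LocalizedModule (.powers f) N) := h
  obtain ⟨_, ⟨n, rfl⟩, hn⟩ := (lTensor_injective_iff_of_isLocalizedModule (.powers f)
    (LocalizedModule.mkLinearMap (.powers f) N) g).1
    (Module.Flat.lTensor_preserves_injective_linearMap g hg) z hz
  exact ⟨n, hn⟩

lemma of_forall_ideal
    (h : ∀ (J : Ideal R) (z : N ⊗[R] J), J.subtype.lTensor N z = 0 → ∃ n : ℕ, f ^ n • z = 0) :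
    IsFlatAway f N := by
  refine Module.Flat.iff_lTensor_injective'.2 fun J ↦
    (lTensor_injective_iff_of_isLocalizedModule (.powers f)
      (LocalizedModule.mkLinearMap (.powers f) N) J.subtype).2 fun z hz ↦ ?_
  obtain ⟨n, hn⟩ := h J z hz
  exact ⟨f ^ n, ⟨n, rfl⟩, hn⟩

lemma of_dvd (h : IsFlatAway f N) (hfg : f ∣ g) : IsFlatAway g N := by
  refine of_forall_ideal fun J z hz ↦ ?_
  obtain ⟨n, hn⟩ := h.exists_pow_smul_eq_zero J.injective_subtype hz
  obtain ⟨c, rfl⟩ := hfg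
  exact ⟨n, by rw [mul_pow, mul_comm, mul_smul, hn, smul_zero]⟩

lemma of_flat [Module.Flat R N] : IsFlatAway f N :=
  of_forall_ideal fun J _ hz ↦ ⟨0, by
    rw [Module.Flat.lTensor_preserves_injective_linearMap J.subtype J.injective_subtype
      (hz.trans (map_zero _).symm), smul_zero]⟩

lemma of_smul_eq_zero (h : ∀ x : N, f • x = 0) : IsFlatAway f N := by
  have : Subsingleton (LocalizedModule (.powers f) N) :=
    LocalizedModule.subsingleton_iff.2 fun x ↦ ⟨f, Submonoid.mem_powers f, h x⟩
  exact inferInstanceAs (Module.Flat R _)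

lemma of_exact {i : N' →ₗ[R] N} {p : N →ₗ[R] N''} (hi : Injective i) (hip : Exact i p)
    (hp : Surjective p) (h' : IsFlatAway f N') (h'' : IsFlatAway f N'') : IsFlatAway f N := by
  have : Module.Flat R (LocalizedModule (.powers f) N') := h'
  have : Module.Flat R (LocalizedModule (.powers f) N'') := h''
  exact flat_of_exact (i := (LocalizedModule.map (.powers f) i).restrictScalars R)
    (p := (LocalizedModule.map (.powers f) p).restrictScalars R)
    (LocalizedModule.map_injective _ i hi) (LocalizedModule.map_exact _ i p hip)
    (LocalizedModule.map_surjective _ p hp)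

lemma of_equiv (e : N ≃ₗ[R] N') (h : IsFlatAway f N) : IsFlatAway f N' := by
  have h0 : IsFlatAway f (⊥ : Submodule R N') := of_flat
  refine of_exact (i := (⊥ : Submodule R N').subtype) (p := e.symm.toLinearMap)
    (Submodule.injective_subtype _) (fun x ↦ ?_) e.symm.surjective h0 h
  simp

lemma of_directed {ι : Type*} [Nonempty ι] {Q : ι → Submodule R N} (hQ : Directed (· ≤ ·) Q)
    (hQ_top : ⨆ i, Q i = ⊤) (h : ∀ i, IsFlatAway f (Q i)) : IsFlatAway f N := by
  refine of_forall_ideal fun J z hz ↦ ?_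
  obtain ⟨P, hP, z, rfl⟩ := TensorProduct.exists_of_fg z
  have hz' : P.subtype.rTensor R (J.subtype.lTensor P z) = 0 := by
    rw [← hz, ← LinearMap.comp_apply, ← LinearMap.comp_apply, LinearMap.lTensor_comp_rTensor,
      LinearMap.rTensor_comp_lTensor]
  have hz0 : J.subtype.lTensor P z = 0 :=
    Module.Flat.rTensor_preserves_injective_linearMap (M := R) _ P.injective_subtype
      (hz'.trans (map_zero _).symm)
  obtain ⟨_, ⟨i, rfl⟩, hi⟩ := P.fg_iff_compact.1 hP (Set.range Q) ⊤ (Set.range_nonempty Q)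
    hQ.directedOn_range (hQ_top ▸ isLUB_iSup) le_top
  obtain ⟨n, hn⟩ := (h i).exists_pow_smul_eq_zero J.injective_subtype
    (z := (Submodule.inclusion hi).rTensor J z) (by
      rw [← LinearMap.comp_apply, LinearMap.lTensor_comp_rTensor, ← LinearMap.rTensor_comp_lTensor,
        LinearMap.comp_apply, hz0, map_zero])
  refine ⟨n, ?_⟩
  have := congrArg ((Q i).subtype.rTensor J) hn
  rwa [map_smul, map_zero, ← LinearMap.comp_apply, ← LinearMap.rTensor_comp,
    Submodule.subtype_comp_inclusion] at this

end IsFlatAway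

section GenericFlatness

lemma IsFlatAway.sup_range {R S L N : Type*} [CommRing R] [CommRing S] [Algebra R S]
    [AddCommGroup L] [Module R L] [Module S L] [IsScalarTower R S L]
    [AddCommGroup N] [Module R N] [Module S N] [IsScalarTower R S N] {f : R} {P : Submodule S N}
    {φ : L →ₗ[S] N} (hP : IsFlatAway f P) (hφ : IsFlatAway f (L ⧸ P.comap φ)) :
    IsFlatAway f ↥(P ⊔ LinearMap.range φ) := by
  let j : L ⧸ P.comap φ →ₗ[S] N ⧸ P := (P.comap φ).mapQ P φ le_rfl
  have hj : Injective j := by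
    rw [← LinearMap.ker_eq_bot, Submodule.ker_mapQ, Submodule.mkQ_map_self]
  have hmem (x : ↥(P ⊔ LinearMap.range φ)) : P.mkQ x ∈ LinearMap.range j := by
    obtain ⟨y, hy, _, ⟨l, rfl⟩, hx⟩ := Submodule.mem_sup.1 x.2
    exact ⟨(P.comap φ).mkQ l, by simp [j, ← hx, (Submodule.Quotient.mk_eq_zero P).2 hy]⟩
  let π : ↥(P ⊔ LinearMap.range φ) →ₗ[S] LinearMap.range j :=
    (P.mkQ.domRestrict _).codRestrict _ hmem
  refine .of_exact (i := (Submodule.inclusion le_sup_left).restrictScalars R)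
    (p := π.restrictScalars R) (Submodule.inclusion_injective le_sup_left) (fun x ↦ ?_) ?_ hP
    (.of_equiv ((LinearEquiv.ofInjective j hj).restrictScalars R) hφ)
  · have hπ : π x = 0 ↔ (x : N) ∈ P := Subtype.ext_iff.trans (Submodule.Quotient.mk_eq_zero P)
    exact hπ.trans ⟨fun hx ↦ ⟨⟨x, hx⟩, rfl⟩, by rintro ⟨y, rfl⟩; exact y.2⟩
  · rintro ⟨_, ⟨l, rfl⟩⟩
    obtain ⟨l, rfl⟩ := (P.comap φ).mkQ_surjective l
    exact ⟨⟨φ l, Submodule.mem_sup_right ⟨l, rfl⟩⟩, rfl⟩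

/-- Every finite `S`-module, in the universe of `S`, is flat over the basic open subset of `Spec R`
defined by some `f ≠ 0`. -/
def HasGenericFlatness (R S : Type u) [CommRing R] [CommRing S] [Algebra R S] : Prop :=
  ∀ (N : Type u) [AddCommGroup N] [Module R N] [Module S N] [IsScalarTower R S N]
    [Module.Finite S N], ∃ f : R, f ≠ 0 ∧ IsFlatAway f N

namespace HasGenericFlatness

lemma self (R : Type u) [CommRing R] [IsDomain R] [IsNoetherianRing R] :
    HasGenericFlatness R R := by
  intro N _ inst₁ inst₂ hassoc hN
  obtain rfl : inst₁ = inst₂ := Module.ext' _ _ fun r x ↦ by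
    simpa using (hassoc.smul_assoc r 1 x).symm
  induction hN using IsNoetherianRing.induction_on_isQuotientEquivQuotientPrime R with
  | subsingleton N => exact ⟨1, one_ne_zero, .of_flat⟩
  | quotient N p e =>
    by_cases hp : p.1 = ⊥
    · exact ⟨1, one_ne_zero,
        .of_equiv (e.trans (Submodule.quotEquivOfEqBot p.1 hp)).symm .of_flat⟩
    · obtain ⟨f, hfp, hf⟩ := Submodule.exists_mem_ne_zero_of_ne_bot hp
      refine ⟨f, hf, .of_equiv e.symm <| .of_smul_eq_zero fun x ↦ ?_⟩
      obtain ⟨y, rfl⟩ := Ideal.Quotient.mk_surjective x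
      exact Ideal.Quotient.eq_zero_iff_mem.2 (p.1.mul_mem_right y hfp)
  | exact N₁ N₂ N₃ i p hi hp hip h₁ h₃ =>
    obtain ⟨f, hf, h₁⟩ := h₁
    obtain ⟨g, hg, h₃⟩ := h₃
    exact ⟨f * g, mul_ne_zero hf hg,
      .of_exact hi hip hp (h₁.of_dvd (dvd_mul_right f g)) (h₃.of_dvd (dvd_mul_left g f))⟩

variable {R S T : Type u} [CommRing R] [CommRing S] [Algebra R S] [CommRing T] [Algebra R T]

lemma of_surjective (h : HasGenericFlatness R S) (φ : S →ₐ[R] T) (hφ : Surjective φ) :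
    HasGenericFlatness R T := by
  intro N _ _ _ _ _
  algebraize [φ.toRingHom]
  let _ : Module S N := Module.compHom N φ.toRingHom
  have : IsScalarTower S T N := ⟨fun s t x ↦ by
    rw [Algebra.smul_def, mul_smul]; rfl⟩
  have : IsScalarTower R S N := .of_algebraMap_smul fun r x ↦ by
    change φ (algebraMap R S r) • x = r • x
    rw [φ.commutes, algebraMap_smul]
  have : Module.Finite S T := .of_surjective (Algebra.linearMap S T) hφ
  have : Module.Finite S N := .trans T N
  exact h N

lemma exists_forall_quotient [IsDomain R] [IsNoetherianRing S] (h : HasGenericFlatness R S)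
    {L : Type u} [AddCommGroup L] [Module R L] [Module S L] [IsScalarTower R S L]
    [Module.Finite S L] (K : ℕ →o Submodule S L) :
    ∃ f : R, f ≠ 0 ∧ ∀ i, IsFlatAway f (L ⧸ K i) := by
  obtain ⟨c, hc⟩ := monotone_stabilizes_iff_noetherian.2 (inferInstanceAs (IsNoetherian S L)) K
  choose F hF0 hF using fun i ↦ h (L ⧸ K i)
  refine ⟨∏ i ∈ Finset.range (c + 1), F i, Finset.prod_ne_zero_iff.2 fun i _ ↦ hF0 i, fun i ↦ ?_⟩
  have hdvd {j : ℕ} (hj : j ≤ c) : F j ∣ ∏ i ∈ Finset.range (c + 1), F i :=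
    Finset.dvd_prod_of_mem F (Finset.mem_range_succ_iff.2 hj)
  rcases le_total i c with hi | hi
  · exact (hF i).of_dvd (hdvd hi)
  · rw [← hc i hi]
    exact (hF c).of_dvd (hdvd le_rfl)

/- The graded pieces of the filtration of `N` by the submodules `∑ j ≤ i, t ^ j (φ L)` are quotients
of `L` by an increasing sequence of submodules, so only finitely many of them are distinct. -/
lemma exists_isFlatAway_of_iSup_range_pow_comp [IsDomain R] [IsNoetherianRing S]
    (h : HasGenericFlatness R S) {L N : Type u} [AddCommGroup L] [Module R L] [Module S L]
    [IsScalarTower R S L] [Module.Finite S L] [AddCommGroup N] [Module R N] [Module S N]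
    [IsScalarTower R S N] (φ : L →ₗ[S] N) (t : Module.End S N)
    (hφ : ⨆ i, LinearMap.range ((t ^ i) ∘ₗ φ) = ⊤) : ∃ f : R, f ≠ 0 ∧ IsFlatAway f N := by
  let ρ : ℕ → Submodule S N := fun i ↦ LinearMap.range ((t ^ i) ∘ₗ φ)
  let Q := partialSups ρ
  have hQ (i : ℕ) : Q i ≤ (Q (i + 1)).comap t := by
    refine partialSups_le _ _ _ fun j hj ↦ ?_
    rintro _ ⟨x, rfl⟩
    exact le_partialSups_of_le ρ (Nat.succ_le_succ hj) ⟨x, by rw [pow_succ']; rfl⟩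
  let K : ℕ →o Submodule S L := ⟨fun i ↦ (Q i).comap ((t ^ (i + 1)) ∘ₗ φ),
    monotone_nat_of_le_succ fun i x hx ↦ by
      rw [Submodule.mem_comap, pow_succ']
      exact hQ i hx⟩
  obtain ⟨f, hf, hfK⟩ := h.exists_forall_quotient K
  obtain ⟨g, hg, hgQ⟩ := h (ρ 0)
  refine ⟨f * g, mul_ne_zero hf hg, .of_directed (Q := fun i ↦ (Q i).restrictScalars R)
    (Monotone.directed_le fun i j hij ↦ Q.monotone hij) ?_ fun i ↦ ?_⟩
  · rw [← Submodule.restrictScalars_iSup, iSup_partialSups_eq, hφ, Submodule.restrictScalars_top]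
  · change IsFlatAway (f * g) (Q i)
    induction i with
    | zero => exact hgQ.of_dvd (dvd_mul_left g f)
    | succ i ih =>
      have := ih.sup_range ((hfK i).of_dvd (dvd_mul_right f g))
      rwa [← partialSups_add_one] at this

lemma polynomial [IsDomain R] [IsNoetherianRing S] (h : HasGenericFlatness R S) :
    HasGenericFlatness R (Polynomial S) := by
  intro N _ _ _ _ hN
  let _ : Module S N := Module.compHom N (algebraMap S (Polynomial S))
  have : IsScalarTower S (Polynomial S) N := .of_algebraMap_smul fun _ _ ↦ rfl
  have : IsScalarTower R S N := .of_algebraMap_smul fun r x ↦ by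
    rw [← algebraMap_smul (Polynomial S), ← IsScalarTower.algebraMap_apply, algebraMap_smul]
  obtain ⟨s, hs⟩ := hN
  let t : Module.End S N := Algebra.lsmul S S N (Polynomial.X : Polynomial S)
  refine h.exists_isFlatAway_of_iSup_range_pow_comp (Submodule.span S (s : Set N)).subtype t ?_
  set V := ⨆ i, LinearMap.range ((t ^ i) ∘ₗ (Submodule.span S (s : Set N)).subtype) with hV
  have htV {x : N} (hx : x ∈ V) : t x ∈ V := by
    have hle : V.map t ≤ V := by
      rw [hV, Submodule.map_iSup]
      refine iSup_le fun i ↦ le_iSup_of_le (i + 1) ?_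
      rw [← LinearMap.range_comp, pow_succ', Module.End.mul_eq_comp, LinearMap.comp_assoc]
    exact hle ⟨x, hx, rfl⟩
  have hsmul (p : Polynomial S) {x : N} (hx : x ∈ V) : p • x ∈ V := by
    induction p using Polynomial.induction_on generalizing x with
    | C a => exact V.smul_mem a hx
    | add p q hp hq => rw [add_smul]; exact V.add_mem (hp hx) (hq hx)
    | monomial n a ih => rw [pow_succ, ← mul_assoc, mul_smul]; exact ih (htV hx)
  refine (Submodule.eq_top_iff').2 fun x ↦ ?_
  have hx : x ∈ Submodule.span (Polynomial S) (s : Set N) := hs ▸ Submodule.mem_top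
  induction hx using Submodule.span_induction with
  | mem x hx => exact Submodule.mem_iSup_of_mem 0 ⟨⟨x, Submodule.subset_span hx⟩, rfl⟩
  | zero => exact V.zero_mem
  | add x y _ _ hx hy => exact V.add_mem hx hy
  | smul p x _ hx => exact hsmul p hx

lemma mvPolynomial (R : Type u) [CommRing R] [IsDomain R] [IsNoetherianRing R] (n : ℕ) :
    HasGenericFlatness R (MvPolynomial (Fin n) R) := by
  induction n with
  | zero =>
    exact (self R).of_surjective (MvPolynomial.isEmptyAlgEquiv R (Fin 0)).symm.toAlgHom
      (MvPolynomial.isEmptyAlgEquiv R (Fin 0)).symm.surjective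
  | succ n ih =>
    exact ih.polynomial.of_surjective (MvPolynomial.finSuccEquiv R n).symm.toAlgHom
      (MvPolynomial.finSuccEquiv R n).symm.surjective

theorem of_finiteType [IsDomain R] [IsNoetherianRing R] [Algebra.FiniteType R S] :
    HasGenericFlatness R S := by
  obtain ⟨n, φ, hφ⟩ := Algebra.FiniteType.iff_quotient_mvPolynomial''.1
    (inferInstance : Algebra.FiniteType R S)
  exact (mvPolynomial R n).of_surjective φ hφ

end HasGenericFlatness

end GenericFlatness

section BaseChange

/-- The identification of `(C ⊗[R] N) ⊗[C] X` with `N ⊗[R] X`, for a module `X` over an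
`R`-algebra `C`. -/
noncomputable def cancelBaseChangeLeft (R C N X : Type*) [CommRing R] [CommRing C] [Algebra R C]
    [AddCommGroup N] [Module R N] [AddCommGroup X] [Module R X] [Module C X]
    [IsScalarTower R C X] : (C ⊗[R] N) ⊗[C] X ≃ₗ[R] N ⊗[R] X :=
  ((TensorProduct.comm C (C ⊗[R] N) X).trans
    (AlgebraTensorModule.cancelBaseChange R C C X N)).restrictScalars R ≪≫ₗ TensorProduct.comm R X N

variable {R C N X Y : Type*} [CommRing R] [CommRing C] [Algebra R C] [AddCommGroup N] [Module R N]
  [AddCommGroup X] [Module R X] [Module C X] [IsScalarTower R C X]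
  [AddCommGroup Y] [Module R Y] [Module C Y] [IsScalarTower R C Y]

lemma cancelBaseChangeLeft_lTensor (g : X →ₗ[C] Y) (w : (C ⊗[R] N) ⊗[C] X) :
    cancelBaseChangeLeft R C N Y (g.lTensor _ w) =
      (g.restrictScalars R).lTensor N (cancelBaseChangeLeft R C N X w) := by
  induction w using TensorProduct.induction_on with
  | zero => simp only [map_zero]
  | add w₁ w₂ h₁ h₂ => simp only [map_add, h₁, h₂]
  | tmul a x =>
    induction a using TensorProduct.induction_on with
    | zero => simp only [TensorProduct.zero_tmul, map_zero]
    | add a₁ a₂ h₁ h₂ => simp only [TensorProduct.add_tmul, map_add, h₁, h₂]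
    | tmul c n => simp [cancelBaseChangeLeft]

lemma lTensor_baseChange_eq_zero_iff (g : X →ₗ[C] Y) (z : N ⊗[R] X) :
    g.lTensor (C ⊗[R] N) ((cancelBaseChangeLeft R C N X).symm z) = 0 ↔
      (g.restrictScalars R).lTensor N z = 0 := by
  rw [← (cancelBaseChangeLeft R C N Y).map_eq_zero_iff, cancelBaseChangeLeft_lTensor,
    LinearEquiv.apply_symm_apply]

end BaseChange

section Kernel

variable {R N X Y : Type*} [CommRing R] [AddCommGroup N] [Module R N]
  [AddCommGroup X] [Module R X] [AddCommGroup Y] [Module R Y] {I : Ideal R} {f : R}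

lemma IsFlatAway.exists_pow_smul_eq_zero_of_quotient
    (h : IsFlatAway (Ideal.Quotient.mk I f) ((R ⧸ I) ⊗[R] N)) {g : X →ₗ[R] Y} (hg : Injective g)
    (hI : ∀ a ∈ I, ∀ y : Y, a • y = 0) {z : N ⊗[R] X} (hz : g.lTensor N z = 0) :
    ∃ n : ℕ, f ^ n • z = 0 := by
  have hIX (a : R) (ha : a ∈ I) (x : X) : a • x = 0 :=
    hg (by rw [map_smul, hI a ha, map_zero])
  let _ : Module (R ⧸ I) X := Module.IsTorsionBySet.module fun x a ↦ hIX a a.2 x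
  let _ : Module (R ⧸ I) Y := Module.IsTorsionBySet.module fun y a ↦ hI a a.2 y
  have : IsScalarTower R (R ⧸ I) X := Module.IsTorsionBySet.isScalarTower _
  have : IsScalarTower R (R ⧸ I) Y := Module.IsTorsionBySet.isScalarTower _
  let g' : X →ₗ[R ⧸ I] Y := g.extendScalarsOfSurjective Ideal.Quotient.mk_surjective
  obtain ⟨n, hn⟩ := h.exists_pow_smul_eq_zero (g := g') hg
    ((lTensor_baseChange_eq_zero_iff g' z).2 hz)
  refine ⟨n, (cancelBaseChangeLeft R (R ⧸ I) N X).symm.map_eq_zero_iff.1 ?_⟩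
  rw [map_smul, ← hn, ← map_pow]
  exact (algebraMap_smul (R ⧸ I) (f ^ n) _).symm

lemma IsFlatAway.exists_pow_smul_eq_lTensor
    (h : IsFlatAway (Ideal.Quotient.mk I f) ((R ⧸ I) ⊗[R] N)) {i : X →ₗ[R] Y} (hi : Injective i)
    {P : Type*} [AddCommGroup P] [Module R P] (p : P →ₗ[R] X)
    (hI : ∀ a ∈ I, ∀ y : Y, a • y ∈ LinearMap.range (i ∘ₗ p)) {z : N ⊗[R] X}
    (hz : i.lTensor N z = 0) : ∃ (n : ℕ) (v : N ⊗[R] P), f ^ n • z = p.lTensor N v := by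
  let Q := LinearMap.range (i ∘ₗ p)
  have hQ : LinearMap.range p = Q.comap i := by
    rw [show Q = _ from LinearMap.range_comp p i, Submodule.comap_map_eq_of_injective hi]
  let j : X ⧸ LinearMap.range p →ₗ[R] Y ⧸ Q := (LinearMap.range p).mapQ Q i hQ.le
  have hj : Injective j := by
    rw [← LinearMap.ker_eq_bot, Submodule.ker_mapQ, ← hQ, Submodule.mkQ_map_self]
  have hIQ (a : R) (ha : a ∈ I) (y : Y ⧸ Q) : a • y = 0 := by
    obtain ⟨y, rfl⟩ := Q.mkQ_surjective y
    exact (Submodule.Quotient.mk_eq_zero Q).2 (hI a ha y)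
  obtain ⟨n, hn⟩ := h.exists_pow_smul_eq_zero_of_quotient hj hIQ
    (z := (LinearMap.range p).mkQ.lTensor N z) (by
      rw [← LinearMap.lTensor_comp_apply, Submodule.mapQ_mkQ, LinearMap.lTensor_comp_apply, hz,
        map_zero])
  rw [← map_smul] at hn
  obtain ⟨v, hv⟩ := (lTensor_exact N (LinearMap.exact_map_mkQ_range p)
    (Submodule.mkQ_surjective _) _).1 hn
  exact ⟨n, v, hv.symm⟩

lemma exists_lTensor_submoduleComap_eq (X : Submodule R Y) {F : Type*} [AddCommGroup F] [Module R F]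
    {π : F →ₗ[R] Y} (hπ : Surjective π) {z : N ⊗[R] X} (hz : X.subtype.lTensor N z = 0) :
    ∃ w : N ⊗[R] X.comap π, (X.comap π).subtype.lTensor N w = 0 ∧
      (π.submoduleComap X).lTensor N w = z := by
  obtain ⟨w, rfl⟩ := LinearMap.lTensor_surjective N
    (π.submoduleComap_surjective_of_surjective X hπ) z
  have hsq : X.subtype ∘ₗ π.submoduleComap X = π ∘ₗ (X.comap π).subtype := rfl
  obtain ⟨k, hk⟩ := (lTensor_exact N (LinearMap.exact_subtype_ker_map π) hπ
    ((X.comap π).subtype.lTensor N w)).1 (by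
      rw [← LinearMap.lTensor_comp_apply, ← hsq, LinearMap.lTensor_comp_apply, hz])
  let ι : LinearMap.ker π →ₗ[R] X.comap π :=
    Submodule.inclusion fun x (hx : π x = 0) ↦ by simp [hx]
  have hι_subtype : (X.comap π).subtype ∘ₗ ι = (LinearMap.ker π).subtype := rfl
  have hι : π.submoduleComap X ∘ₗ ι = 0 := LinearMap.ext fun x ↦ Subtype.ext x.2
  refine ⟨w - ι.lTensor N k, ?_, ?_⟩
  · rw [map_sub, ← hk, ← LinearMap.lTensor_comp_apply, hι_subtype, sub_self]
  · rw [map_sub, ← LinearMap.lTensor_comp_apply _ _ ι, hι, LinearMap.lTensor_zero,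
      LinearMap.zero_apply, sub_zero]

lemma lTensor_rTensor_eq_zero_of_ker_le {K L V F : Type*} [AddCommGroup K] [Module R K]
    [AddCommGroup L] [Module R L] [AddCommGroup V] [Module R V] [AddCommGroup F] [Module R F]
    [Module.Flat R F] {u : K →ₗ[R] L} {ρ : K →ₗ[R] V}
    (h : LinearMap.ker (u.lTensor N) ≤ LinearMap.ker (ρ.lTensor N)) {v : N ⊗[R] (K ⊗[R] F)}
    (hv : (u.rTensor F).lTensor N v = 0) : (ρ.rTensor F).lTensor N v = 0 := by
  obtain ⟨v, rfl⟩ := (TensorProduct.assoc R N K F).surjective v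
  have hu : (u.rTensor F).lTensor N (TensorProduct.assoc R N K F v) =
      TensorProduct.assoc R N L F ((u.lTensor N).rTensor F v) :=
    TensorProduct.map_map_assoc LinearMap.id u LinearMap.id v
  have hρ : (ρ.rTensor F).lTensor N (TensorProduct.assoc R N K F v) =
      TensorProduct.assoc R N V F ((ρ.lTensor N).rTensor F v) :=
    TensorProduct.map_map_assoc LinearMap.id ρ LinearMap.id v
  rw [hu, LinearEquiv.map_eq_zero_iff] at hv
  rw [hρ, LinearEquiv.map_eq_zero_iff]
  obtain ⟨k, rfl⟩ := (Module.Flat.rTensor_exact F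
    (LinearMap.exact_subtype_ker_map (u.lTensor N)) v).1 hv
  rw [← LinearMap.rTensor_comp_apply,
    show ρ.lTensor N ∘ₗ (LinearMap.ker (u.lTensor N)).subtype = 0 from
      LinearMap.ext fun x ↦ h x.2, LinearMap.rTensor_zero, LinearMap.zero_apply]

/-- The `R`-linear map `J ⊗[R] F → X` sending `c ⊗ₜ x` to `c • π x`, where `J` is an ideal of an
`R`-algebra `C`, and `X` an `R`-submodule of the `C`-module `Y` containing `J • Y`. -/
noncomputable def idealTensorLift {C F : Type*} [CommRing C] [Algebra R C] [Module C Y]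
    [IsScalarTower R C Y] [AddCommGroup F] [Module R F] {J : Ideal C} {X : Submodule R Y}
    (hX : ∀ c ∈ J, ∀ y : Y, c • y ∈ X) (π : F →ₗ[R] Y) : J ⊗[R] F →ₗ[R] X :=
  TensorProduct.lift <| LinearMap.mk₂ R
    (fun c x ↦ ⟨(c : C) • π x, hX c c.2 (π x)⟩)
    (fun c d x ↦ Subtype.ext (add_smul (c : C) d (π x)))
    (fun r c x ↦ Subtype.ext (smul_assoc r (c : C) (π x)))
    (fun c x y ↦ Subtype.ext (by simp))
    (fun r c x ↦ Subtype.ext (by simp [smul_comm r (c : C)]))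

/- The element `z` lifts to an element `w` of `N ⊗ π⁻¹(X)`, and some `f ^ n • w` comes from
`N ⊗ (I ⊗ F)`. Its preimage there dies in `N ⊗ (IC ⊗ F)`, through which the map to `N ⊗ X`
factors. -/
lemma IsFlatAway.exists_pow_smul_eq_zero_of_ker_le {C F : Type*} [CommRing C] [Algebra R C]
    [Module C Y] [IsScalarTower R C Y] [AddCommGroup F] [Module R F] [Module.Flat R F]
    (h : IsFlatAway (Ideal.Quotient.mk I f) ((R ⧸ I) ⊗[R] N))
    (hker : LinearMap.ker (I.subtype.lTensor N) ≤ LinearMap.ker ((Algebra.idealMap C I).lTensor N))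
    {π : F →ₗ[R] Y} (hπ : Surjective π) {X : Submodule R Y}
    (hX : ∀ c ∈ I.map (algebraMap R C), ∀ y : Y, c • y ∈ X) {z : N ⊗[R] X}
    (hz : X.subtype.lTensor N z = 0) : ∃ n : ℕ, f ^ n • z = 0 := by
  have hIF (a : R) (ha : a ∈ I) (x : F) : a • x ∈ X.comap π := by
    rw [Submodule.mem_comap, map_smul, ← algebraMap_smul C]
    exact hX _ (Ideal.mem_map_of_mem _ ha) _
  let p : I ⊗[R] F →ₗ[R] X.comap π := idealTensorLift hIF LinearMap.id
  obtain ⟨w, hw, rfl⟩ := exists_lTensor_submoduleComap_eq X hπ hz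
  obtain ⟨n, v, hv⟩ := h.exists_pow_smul_eq_lTensor (X.comap π).injective_subtype p
    (fun a ha x ↦ ⟨⟨a, ha⟩ ⊗ₜ x, rfl⟩) hw
  have hp : I.subtype.rTensor F =
      (TensorProduct.lid R F).symm.toLinearMap ∘ₗ (X.comap π).subtype ∘ₗ p :=
    TensorProduct.ext' fun a x ↦ ((TensorProduct.lid R F).symm_apply_apply ((a : R) ⊗ₜ x)).symm
  have hq : π.submoduleComap X ∘ₗ p =
      idealTensorLift hX π ∘ₗ (Algebra.idealMap C I).rTensor F :=
    TensorProduct.ext' fun a x ↦ Subtype.ext <| by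
      change π ((a : R) • x) = algebraMap R C a • π x
      rw [map_smul, algebraMap_smul]
  have hv0 : (I.subtype.rTensor F).lTensor N v = 0 := by
    rw [hp, LinearMap.lTensor_comp_apply, LinearMap.lTensor_comp_apply, ← hv, map_smul, hw,
      smul_zero, map_zero]
  refine ⟨n, ?_⟩
  rw [← map_smul, hv, ← LinearMap.lTensor_comp_apply, hq, LinearMap.lTensor_comp_apply,
    lTensor_rTensor_eq_zero_of_ker_le hker hv0, map_zero]

end Kernel

/-- The module `L` is flat with respect to quotients killed by the ideal `I`; equivalently,
`Tor₁ L Q = 0` for every module `Q` with `I • Q = 0`. -/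
def IsFlatAlong {C : Type u} [CommRing C] (I : Ideal C) (L : Type*) [AddCommGroup L] [Module C L] :
    Prop :=
  ∀ (Y : Type u) [AddCommGroup Y] [Module C Y] (X : Submodule C Y), I • ⊤ ≤ X →
    Injective (X.subtype.lTensor L)

namespace IsFlatAlong

variable {C : Type u} {L : Type*} [CommRing C] {I : Ideal C} [AddCommGroup L] [Module C L]

lemma lTensor_injective (h : IsFlatAlong I L) {X Y : Type u} [AddCommGroup X] [Module C X]
    [AddCommGroup Y] [Module C Y] {g : X →ₗ[C] Y} (hg : Injective g)
    (hI : I • ⊤ ≤ LinearMap.range g) : Injective (g.lTensor L) := by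
  have hg' : g = (LinearMap.range g).subtype ∘ₗ (LinearEquiv.ofInjective g hg).toLinearMap := rfl
  rw [hg', LinearMap.lTensor_comp, LinearMap.coe_comp]
  exact (h Y _ hI).comp ((LinearEquiv.ofInjective g hg).lTensor L).injective

lemma pow (h : IsFlatAlong I L) (n : ℕ) : IsFlatAlong (I ^ n) L := by
  induction n with
  | zero =>
    intro Y _ _ X hX
    rw [pow_zero, Submodule.one_smul, top_le_iff] at hX
    subst hX
    exact ((LinearEquiv.lTensor L Submodule.topEquiv)).injective
  | succ n ih =>
    intro Y _ _ X hX
    let Z := X ⊔ I ^ n • ⊤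
    have hZ : I • Z ≤ X := by
      rw [Submodule.smul_sup, ← mul_smul, ← pow_succ']
      exact sup_le Submodule.smul_le_right hX
    have hXZ : X.subtype = Z.subtype ∘ₗ Submodule.inclusion le_sup_left := rfl
    rw [hXZ, LinearMap.lTensor_comp, LinearMap.coe_comp]
    refine (ih Y Z le_sup_right).comp
      (h.lTensor_injective (Submodule.inclusion_injective _) ?_)
    rw [Submodule.range_inclusion]
    intro z hz
    exact hZ (Submodule.mem_smul_top_iff I Z z |>.1 hz)

lemma mem_pow_smul_top [IsNoetherianRing C] (h : IsFlatAlong I L) {J : Ideal C} {z : L ⊗[C] J}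
    (hz : J.subtype.lTensor L z = 0) (n : ℕ) : z ∈ I ^ n • (⊤ : Submodule C (L ⊗[C] J)) := by
  obtain ⟨k, hk⟩ := Ideal.exists_pow_inf_eq_pow_smul I J
  let V : Submodule C C := I ^ (n + k) • ⊤
  have hV : V.comap J.subtype ≤ I ^ n • ⊤ := fun x hx ↦ by
    have hx' : (x : C) ∈ I ^ (n + k) • (⊤ : Submodule C C) ⊓ J := ⟨hx, x.2⟩
    rw [hk (n + k) (Nat.le_add_left k n), Nat.add_sub_cancel] at hx'
    exact (Submodule.mem_smul_top_iff _ _ _).2 (Submodule.smul_mono le_rfl inf_le_right hx')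
  have hrange (w : L ⊗[C] V.comap J.subtype) :
      (V.comap J.subtype).subtype.lTensor L w ∈ I ^ n • (⊤ : Submodule C (L ⊗[C] J)) := by
    induction w using TensorProduct.induction_on with
    | zero => rw [map_zero]; exact zero_mem _
    | add w₁ w₂ h₁ h₂ => rw [map_add]; exact add_mem h₁ h₂
    | tmul l x =>
      rw [LinearMap.lTensor_tmul]
      have hmap := Submodule.mem_map_of_mem (f := TensorProduct.mk C L J l) (hV x.2)
      rw [Submodule.map_smul''] at hmap
      exact Submodule.smul_mono le_rfl le_top hmap
  let g : J ⧸ V.comap J.subtype →ₗ[C] C ⧸ V := Submodule.mapQ _ _ J.subtype le_rfl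
  have hg : Injective g := by
    rw [← LinearMap.ker_eq_bot, Submodule.ker_mapQ, Submodule.mkQ_map_self]
  have hgL : Injective (g.lTensor L) := (h.pow (n + k)).lTensor_injective hg <| by
    refine Submodule.smul_le.2 fun a ha y _ ↦ ?_
    obtain ⟨y, rfl⟩ := V.mkQ_surjective y
    rw [← map_smul, Submodule.mkQ_apply,
      (Submodule.Quotient.mk_eq_zero V).2 (Submodule.smul_mem_smul ha trivial)]
    exact zero_mem _
  have hz' : (V.comap J.subtype).mkQ.lTensor L z = 0 := hgL <| by
    rw [← LinearMap.lTensor_comp_apply, Submodule.mapQ_mkQ, LinearMap.lTensor_comp_apply, hz,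
      map_zero, map_zero]
  obtain ⟨w, rfl⟩ := (lTensor_exact L (LinearMap.exact_subtype_mkQ _)
    (Submodule.mkQ_surjective _) z).1 hz'
  exact hrange w

/- Artin–Rees puts the kernel of `L ⊗ J → L` into every `I ^ n • (L ⊗ J)`, and Krull's theorem
shows that the intersection of these vanishes. -/
theorem flat {T : Type*} [CommRing T] [Algebra C T] [Module T L] [IsScalarTower C T L]
    [IsNoetherianRing C] [IsNoetherianRing T] [Module.Finite T L] (h : IsFlatAlong I L)
    (hI : I.map (algebraMap C T) ≤ Ideal.jacobson ⊥) : Module.Flat C L := by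
  refine Module.Flat.iff_lTensor_injective'.2 fun J ↦ (injective_iff_map_eq_zero _).2 fun z hz ↦ ?_
  have : Module.Finite T (L ⊗[C] J) :=
    .equiv (AlgebraTensorModule.cancelBaseChange C T T L J)
  have hle (n : ℕ) : z ∈ I.map (algebraMap C T) ^ n • (⊤ : Submodule T (L ⊗[C] J)) := by
    rw [← Ideal.map_pow, ← Submodule.restrictScalars_mem C, Ideal.smul_restrictScalars]
    exact h.mem_pow_smul_top hz n
  have hbot := Ideal.iInf_pow_smul_eq_bot_of_le_jacobson (M := L ⊗[C] J) _ hI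
  rw [← Submodule.mem_bot T, ← hbot, Submodule.mem_iInf]
  exact hle

end IsFlatAlong

section LocalCriterion

variable {R S C : Type u} [CommRing R] [CommRing S] [Algebra R S] [CommRing C] [Algebra R C]
  {I : Ideal R} {f : R}

lemma isFlatAlong_localization_atPrime
    (h : IsFlatAway (Ideal.Quotient.mk I f) ((R ⧸ I) ⊗[R] S))
    (hker : LinearMap.ker (I.subtype.lTensor S) ≤ LinearMap.ker ((Algebra.idealMap C I).lTensor S))
    (q : Ideal (C ⊗[R] S)) [q.IsPrime] (hf : algebraMap R (C ⊗[R] S) f ∉ q) :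
    IsFlatAlong (I.map (algebraMap R C)) (Localization.AtPrime q) := by
  intro Y _ _ X hX
  let _ : Module R Y := Module.compHom Y (algebraMap R C)
  have : IsScalarTower R C Y := .of_algebraMap_smul fun _ _ ↦ rfl
  refine (lTensor_injective_iff_of_isLocalizedModule q.primeCompl
    (Algebra.linearMap (C ⊗[R] S) (Localization.AtPrime q)) X.subtype).2 fun z hz ↦ ?_
  let e := cancelBaseChangeLeft R C S X
  obtain ⟨n, hn⟩ := h.exists_pow_smul_eq_zero_of_ker_le hker
    (Finsupp.linearCombination_id_surjective R Y) (X := X.restrictScalars R)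
    (fun c hc y ↦ hX (Submodule.smul_mem_smul hc trivial)) (z := e z)
    ((lTensor_baseChange_eq_zero_iff X.subtype (e z)).1 (by rwa [e.symm_apply_apply]))
  refine ⟨algebraMap R (C ⊗[R] S) f ^ n, fun hfn ↦ hf (‹q.IsPrime›.mem_of_pow_mem n hfn), ?_⟩
  rw [← map_pow, algebraMap_smul]
  exact e.map_eq_zero_iff.1 ((map_smul e _ _).trans hn)

lemma flat_localization_atPrime [IsNoetherianRing C] [IsNoetherianRing (C ⊗[R] S)]
    (h : IsFlatAway (Ideal.Quotient.mk I f) ((R ⧸ I) ⊗[R] S))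
    (hker : LinearMap.ker (I.subtype.lTensor S) ≤ LinearMap.ker ((Algebra.idealMap C I).lTensor S))
    (q : Ideal (C ⊗[R] S)) [q.IsPrime] (hI : I.map (algebraMap R (C ⊗[R] S)) ≤ q)
    (hf : algebraMap R (C ⊗[R] S) f ∉ q) : Module.Flat C (Localization.AtPrime q) := by
  have : IsNoetherianRing (Localization.AtPrime q) :=
    IsLocalization.isNoetherianRing q.primeCompl _ inferInstance
  refine (isFlatAlong_localization_atPrime h hker q hf).flat (T := Localization.AtPrime q) ?_
  refine le_trans ?_ (IsLocalRing.maximalIdeal_le_jacobson _)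
  rw [Ideal.map_map, ← IsScalarTower.algebraMap_eq,
    IsScalarTower.algebraMap_eq R (C ⊗[R] S), ← Ideal.map_map,
    ← Localization.AtPrime.map_eq_maximalIdeal]
  exact Ideal.map_mono hI

end LocalCriterion

section FiniteStage

variable {R N V : Type*} [CommRing R] [AddCommGroup N] [Module R N] [AddCommGroup V] [Module R V]

lemma exists_fg_lTensor_inclusion_eq_zero {P : Submodule R V} (hP : P.FG) {t : N ⊗[R] P}
    (ht : P.subtype.lTensor N t = 0) :
    ∃ (Q : Submodule R V) (hPQ : P ≤ Q), Q.FG ∧ (Submodule.inclusion hPQ).lTensor N t = 0 := by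
  obtain ⟨Q, hPQ, hQ, h⟩ := TensorProduct.eq_zero_of_fg_of_subtype_eq_zero hP
    (t := TensorProduct.comm R N P t)
    ((TensorProduct.map_comm _ _ t).trans ((LinearEquiv.map_eq_zero_iff _).2 ht))
  exact ⟨Q, hPQ, hQ, (TensorProduct.comm R N Q).map_eq_zero_iff.1
    ((TensorProduct.map_comm _ _ t).symm.trans h)⟩

lemma exists_fg_forall_lTensor_eq_zero {L : Type*} [AddCommGroup L] [Module R L]
    [Module.Finite R L] {φ : L →ₗ[R] V} {k : N ⊗[R] L} (hk : φ.lTensor N k = 0) :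
    ∃ Q : Submodule R V, Q.FG ∧ ∀ (W : Type*) [AddCommGroup W] [Module R W] (ψ : L →ₗ[R] W)
      (j : W →ₗ[R] V), Injective j → j ∘ₗ ψ = φ → Q ≤ LinearMap.range j → ψ.lTensor N k = 0 := by
  have hrange : (LinearMap.range φ).subtype.lTensor N (φ.rangeRestrict.lTensor N k) = 0 := by
    rw [← LinearMap.lTensor_comp_apply, LinearMap.rangeRestrict,
      LinearMap.subtype_comp_codRestrict, hk]
  obtain ⟨Q, hφQ, hQ, h⟩ := exists_fg_lTensor_inclusion_eq_zero
    (Module.Finite.iff_fg.1 (Module.Finite.range φ)) hrange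
  refine ⟨Q, hQ, fun W _ _ ψ j hj hψ hQj ↦ ?_⟩
  have hfac : ψ = (LinearEquiv.ofInjective j hj).symm.toLinearMap ∘ₗ Submodule.inclusion hQj ∘ₗ
      Submodule.inclusion hφQ ∘ₗ φ.rangeRestrict := by
    ext x
    exact ((LinearEquiv.symm_apply_eq _).2 (Subtype.ext (LinearMap.congr_fun hψ x).symm)).symm
  rw [hfac, LinearMap.lTensor_comp_apply, LinearMap.lTensor_comp_apply,
    LinearMap.lTensor_comp_apply, h, map_zero, map_zero]

end FiniteStage

/-- The finitely generated `R`-subalgebras of `A`, directed by inclusion. A property holds for all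
sufficiently large ones if it holds eventually along `Filter.atTop`. -/
abbrev FGSubalgebra (R A : Type*) [CommRing R] [CommRing A] [Algebra R A] :=
  {C : Subalgebra R A // C.FG}

namespace FGSubalgebra

open Filter

variable {R A : Type*} [CommRing R] [CommRing A] [Algebra R A]

instance : SemilatticeSup (FGSubalgebra R A) :=
  Subtype.semilatticeSup fun _ _ h₁ h₂ ↦ h₁.sup h₂

instance : OrderBot (FGSubalgebra R A) :=
  Subtype.orderBot Subalgebra.fg_bot

instance (C : FGSubalgebra R A) : Algebra.FiniteType R C.1 :=
  C.1.fg_iff_finiteType.1 C.2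

lemma eventually_mem (x : A) : ∀ᶠ C : FGSubalgebra R A in atTop, x ∈ C.1 := by
  have hx : (Algebra.adjoin R {x}).FG := Subalgebra.fg_def.2 ⟨{x}, Set.finite_singleton x, rfl⟩
  filter_upwards [eventually_ge_atTop ⟨_, hx⟩] with C hC
  exact hC (Algebra.self_mem_adjoin_singleton R x)

lemma eventually_mem_span {s : Set A} {x : A} (hx : x ∈ Ideal.span s) :
    ∀ᶠ C : FGSubalgebra R A in atTop, x ∈ Submodule.span C.1 s := by
  induction hx using Submodule.span_induction with
  | mem x hx => exact .of_forall fun C ↦ Submodule.subset_span hx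
  | zero => exact .of_forall fun C ↦ zero_mem _
  | add x y _ _ hx hy =>
    filter_upwards [hx, hy] with C hx hy using add_mem hx hy
  | smul a x _ hx =>
    filter_upwards [hx, eventually_mem a] with C hx ha
    exact Submodule.smul_mem _ (⟨a, ha⟩ : C.1) hx

lemma eventually_mem_map_map {I : Ideal R} {x : A} (hx : x ∈ I.map (algebraMap R A)) :
    ∀ᶠ C : FGSubalgebra R A in atTop, ∃ y ∈ I.map (algebraMap R C.1), (y : A) = x := by
  filter_upwards [eventually_mem_span hx] with C hC
  have hle : Submodule.span C.1 (algebraMap R A '' I) ≤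
      Submodule.map (Algebra.linearMap C.1 A) (I.map (algebraMap R C.1)) := by
    rw [Submodule.span_le]
    rintro _ ⟨a, ha, rfl⟩
    exact ⟨algebraMap R C.1 a, Ideal.mem_map_of_mem _ ha, rfl⟩
  exact hle hC

lemma eventually_lTensor_idealMap_eq_zero [IsNoetherianRing R] {N : Type*} [AddCommGroup N]
    [Module R N] {I : Ideal R} {k : N ⊗[R] I} (hk : (Algebra.idealMap A I).lTensor N k = 0) :
    ∀ᶠ C : FGSubalgebra R A in atTop, (Algebra.idealMap C.1 I).lTensor N k = 0 := by
  obtain ⟨Q, ⟨s, hs⟩, hQ⟩ := exists_fg_forall_lTensor_eq_zero hk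
  have hsC : ∀ᶠ C : FGSubalgebra R A in atTop,
      ∀ x ∈ s, ∃ y ∈ I.map (algebraMap R C.1), (y : A) = x :=
    s.eventually_all.2 fun x _ ↦ eventually_mem_map_map x.2
  filter_upwards [hsC] with C hC
  have hCA (y : I.map (algebraMap R C.1)) : (y : A) ∈ I.map (algebraMap R A) := by
    rw [IsScalarTower.algebraMap_eq R C.1 A, ← Ideal.map_map]
    exact Ideal.mem_map_of_mem _ y.2
  let j : I.map (algebraMap R C.1) →ₗ[R] I.map (algebraMap R A) :=
    { toFun y := ⟨y, hCA y⟩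
      map_add' _ _ := rfl
      map_smul' _ _ := rfl }
  refine hQ _ (Algebra.idealMap C.1 I) j ?_ rfl ?_
  · exact fun _ _ h ↦ Subtype.ext <| Subtype.ext <|
      congrArg (fun x : I.map (algebraMap R A) ↦ (x : A)) h
  · rw [← hs, Submodule.span_le]
    intro x hx
    obtain ⟨y, hy, hyx⟩ := hC x hx
    exact ⟨⟨y, hy⟩, Subtype.ext hyx⟩

end FGSubalgebra

section EventuallyFlat

open Filter

variable {R A S : Type u} [CommRing R] [CommRing A] [Algebra R A] [CommRing S] [Algebra R S]

lemma ker_lTensor_subtype_le_ker_lTensor_idealMap [Module.Flat A (A ⊗[R] S)] (I : Ideal R) :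
    LinearMap.ker (I.subtype.lTensor S) ≤ LinearMap.ker ((Algebra.idealMap A I).lTensor S) := by
  intro k hk
  let J := I.map (algebraMap R A)
  have hinj := Module.Flat.lTensor_preserves_injective_linearMap (M := A ⊗[R] S) J.subtype
    J.injective_subtype
  have hsq : J.subtype.restrictScalars R ∘ₗ Algebra.idealMap A I =
    Algebra.linearMap R A ∘ₗ I.subtype := rfl
  refine (cancelBaseChangeLeft R A S J).symm.map_eq_zero_iff.1 (hinj ?_)
  rw [map_zero, lTensor_baseChange_eq_zero_iff, ← LinearMap.lTensor_comp_apply, hsq,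
    LinearMap.lTensor_comp_apply, hk, map_zero]

lemma eventually_ker_lTensor_subtype_le [IsNoetherianRing R] [IsNoetherianRing S]
    [Module.Flat A (A ⊗[R] S)] (I : Ideal R) : ∀ᶠ C : FGSubalgebra R A in atTop,
      LinearMap.ker (I.subtype.lTensor S) ≤ LinearMap.ker ((Algebra.idealMap C.1 I).lTensor S) := by
  obtain ⟨s, hs⟩ : (LinearMap.ker (I.subtype.baseChange S)).FG := IsNoetherian.noetherian _
  have hsC : ∀ᶠ C : FGSubalgebra R A in atTop,
      ∀ k ∈ s, (Algebra.idealMap C.1 I).lTensor S k = 0 := by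
    refine s.eventually_all.2 fun k hk ↦ FGSubalgebra.eventually_lTensor_idealMap_eq_zero
      (ker_lTensor_subtype_le_ker_lTensor_idealMap I ?_)
    exact (hs ▸ Submodule.subset_span hk : k ∈ LinearMap.ker (I.subtype.baseChange S))
  filter_upwards [hsC] with C hC k hk
  have hle : LinearMap.ker (I.subtype.baseChange S) ≤
      LinearMap.ker ((Algebra.idealMap C.1 I).baseChange S) := by
    rw [← hs, Submodule.span_le]
    exact hC
  exact hle hk

lemma exists_notMem_isFlatAway_quotient [IsNoetherianRing R] [Algebra.FiniteType R S] (I : Ideal R)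
    [I.IsPrime] : ∃ f ∉ I, IsFlatAway (Ideal.Quotient.mk I f) ((R ⧸ I) ⊗[R] S) := by
  obtain ⟨f, hf, h⟩ := HasGenericFlatness.of_finiteType (R := R ⧸ I) (S := (R ⧸ I) ⊗[R] S)
    ((R ⧸ I) ⊗[R] S)
  obtain ⟨f, rfl⟩ := Ideal.Quotient.mk_surjective f
  exact ⟨f, fun hfI ↦ hf (Ideal.Quotient.eq_zero_iff_mem.2 hfI), h⟩

/- Noetherian induction on `I`. If `I` is prime, the primes over `I` avoiding some `f ∉ I` are
dealt with by generic flatness and the local criterion, the others contain `I ⊔ (f)`. -/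
lemma eventually_flat_localization_atPrime [IsNoetherianRing R] [Algebra.FiniteType R S]
    [Module.Flat A (A ⊗[R] S)] (I : Ideal R) : ∀ᶠ C : FGSubalgebra R A in atTop,
      ∀ (q : Ideal (C.1 ⊗[R] S)) [q.IsPrime], I.map (algebraMap R (C.1 ⊗[R] S)) ≤ q →
        Module.Flat C.1 (Localization.AtPrime q) := by
  induction I using WellFoundedGT.induction with | ind I ih => ?_
  have ih_sup {a : R} (ha : a ∉ I) : ∀ᶠ C : FGSubalgebra R A in atTop,
      ∀ (q : Ideal (C.1 ⊗[R] S)) [q.IsPrime], I.map (algebraMap R (C.1 ⊗[R] S)) ≤ q →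
        algebraMap R _ a ∈ q → Module.Flat C.1 (Localization.AtPrime q) := by
    filter_upwards [ih (I ⊔ Ideal.span {a}) (by simpa using ha)] with C hC q _ hI haq
    refine hC q ?_
    rw [Ideal.map_sup, Ideal.map_span, Set.image_singleton]
    exact sup_le hI ((Ideal.span_singleton_le_iff_mem _).2 haq)
  by_cases hprime : I.IsPrime
  · have : IsNoetherianRing S := Algebra.FiniteType.isNoetherianRing R S
    obtain ⟨f, hf, hflat⟩ := exists_notMem_isFlatAway_quotient (S := S) I
    filter_upwards [ih_sup hf, eventually_ker_lTensor_subtype_le (A := A) (S := S) I]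
      with C hC hker q _ hI
    have : IsNoetherianRing C.1 := Algebra.FiniteType.isNoetherianRing R C.1
    have : IsNoetherianRing (C.1 ⊗[R] S) := Algebra.FiniteType.isNoetherianRing C.1 _
    by_cases hfq : algebraMap R _ f ∈ q
    · exact hC q hI hfq
    · exact flat_localization_atPrime hflat hker q hI hfq
  · rcases Ideal.not_isPrime_iff.1 hprime with rfl | ⟨a, ha, b, hb, hab⟩
    · refine .of_forall fun C q hq htop ↦ absurd ?_ hq.ne_top
      rwa [Ideal.map_top, top_le_iff] at htop
    · filter_upwards [ih_sup ha, ih_sup hb] with C hCa hCb q hq hI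
      have habq : algebraMap R _ a * algebraMap R _ b ∈ q := by
        rw [← map_mul]
        exact hI (Ideal.mem_map_of_mem _ hab)
      rcases hq.mem_or_mem habq with haq | hbq
      · exact hCa q hI haq
      · exact hCb q hI hbq

variable (R A S) in
theorem eventually_flat_tensorProduct [IsNoetherianRing R] [Algebra.FiniteType R S]
    [Module.Flat A (A ⊗[R] S)] :
    ∀ᶠ C : FGSubalgebra R A in atTop, Module.Flat C.1 (C.1 ⊗[R] S) := by
  filter_upwards [eventually_flat_localization_atPrime (A := A) (S := S) (⊥ : Ideal R)] with C hC
  exact Module.flat_of_isLocalized_maximal (C.1 ⊗[R] S) _ (fun q ↦ Localization.AtPrime q)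
    (fun q ↦ Algebra.linearMap _ _) fun q _ ↦ hC q (by simp)

end EventuallyFlat

section RangeComap

variable {R S : Type*} [CommRing R] [CommRing S] [Algebra R S]

variable (R S) in
lemma exists_ideal_forall_mem_range_comap_iff [Module.Flat R S] [Algebra.FinitePresentation R S] :
    ∃ J : Ideal R, ∀ p : PrimeSpectrum R,
      p ∈ Set.range (PrimeSpectrum.comap (algebraMap R S)) ↔ ¬ J ≤ p.asIdeal := by
  obtain ⟨s, hs⟩ := (PrimeSpectrum.isOpen_iff _).1
    (PrimeSpectrum.isOpenMap_comap_of_hasGoingDown_of_finitePresentation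
      (R := R) (S := S)).isOpen_range
  refine ⟨Ideal.span s, fun p ↦ ?_⟩
  rw [← not_iff_not, ← Set.mem_compl_iff, hs, not_not, PrimeSpectrum.mem_zeroLocus, Ideal.span_le]

lemma nontrivial_tensorProduct_iff_of_algHom {k K : Type*} [Field k] [Field K] [Algebra R k]
    [Algebra R K] (φ : k →ₐ[R] K) : Nontrivial (k ⊗[R] S) ↔ Nontrivial (K ⊗[R] S) := by
  algebraize [φ.toRingHom]
  have : IsScalarTower R k K := .of_algHom φ
  rw [← Module.FaithfullyFlat.nontrivial_tensorProduct_iff_right k K]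
  exact (AlgebraTensorModule.cancelBaseChange R k K K S).toEquiv.nontrivial_congr

lemma mem_range_comap_algebraMap_tensorProduct_iff {C : Type*} [CommRing C] [Algebra R C]
    (p : PrimeSpectrum C) :
    p ∈ Set.range (PrimeSpectrum.comap (algebraMap C (C ⊗[R] S))) ↔
      Nontrivial (p.asIdeal.ResidueField ⊗[R] S) := by
  rw [← PrimeSpectrum.nontrivial_iff_mem_rangeComap]
  exact (AlgebraTensorModule.cancelBaseChange R C C p.asIdeal.ResidueField S).toEquiv
    |>.nontrivial_congr

lemma comap_mem_range_comap_algebraMap_tensorProduct_iff {C D : Type*} [CommRing C] [Algebra R C]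
    [CommRing D] [Algebra R D] (φ : C →ₐ[R] D) (p : PrimeSpectrum D) :
    p.comap φ.toRingHom ∈ Set.range (PrimeSpectrum.comap (algebraMap C (C ⊗[R] S))) ↔
      p ∈ Set.range (PrimeSpectrum.comap (algebraMap D (D ⊗[R] S))) := by
  rw [mem_range_comap_algebraMap_tensorProduct_iff, mem_range_comap_algebraMap_tensorProduct_iff]
  exact nontrivial_tensorProduct_iff_of_algHom (Ideal.ResidueField.mapₐ _ _ φ rfl)

end RangeComap

section EventuallyFaithfullyFlat

open Filter

variable (R A S : Type u) [CommRing R] [CommRing A] [Algebra R A] [CommRing S] [Algebra R S]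

/- Over one `C` for which `C ⊗[R] S` is flat, the image of the spectrum is the complement of some
`V(J)`. As `J` generates the unit ideal of `A`, it does so over all larger `C`. -/
theorem eventually_faithfullyFlat_tensorProduct [IsNoetherianRing R] [Algebra.FiniteType R S]
    [Module.FaithfullyFlat A (A ⊗[R] S)] :
    ∀ᶠ C : FGSubalgebra R A in atTop, Module.FaithfullyFlat C.1 (C.1 ⊗[R] S) := by
  have hflat := eventually_flat_tensorProduct R A S
  obtain ⟨D, hD⟩ := hflat.exists
  have : Algebra.FinitePresentation R S := Algebra.FinitePresentation.of_finiteType.1 inferInstance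
  obtain ⟨J, hJ⟩ := exists_ideal_forall_mem_range_comap_iff D.1 (D.1 ⊗[R] S)
  have hJA : (1 : A) ∈ J.map D.1.val := by
    rw [← Ideal.eq_top_iff_one]
    by_contra hne
    obtain ⟨m, hm, hJm⟩ := Ideal.exists_le_maximal _ hne
    have hmem := (comap_mem_range_comap_algebraMap_tensorProduct_iff (S := S) D.1.val
      ⟨m, hm.isPrime⟩).2 (PrimeSpectrum.comap_surjective_of_faithfullyFlat _)
    exact (hJ _).1 hmem (Ideal.map_le_iff_le_comap.1 hJm)
  filter_upwards [hflat, eventually_ge_atTop D, FGSubalgebra.eventually_mem_span hJA]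
    with C hC hDC hJC
  refine Module.FaithfullyFlat.of_comap_surjective fun p ↦ ?_
  refine (comap_mem_range_comap_algebraMap_tensorProduct_iff (S := S) (Subalgebra.inclusion hDC)
    p).1 ((hJ _).2 fun hJp ↦ ?_)
  have hle : Submodule.span C.1 (D.1.val '' J) ≤
      Submodule.map (Algebra.linearMap C.1 A) p.asIdeal := by
    rw [Submodule.span_le]
    rintro _ ⟨a, ha, rfl⟩
    exact ⟨_, hJp ha, rfl⟩
  obtain ⟨y, hy, hy1⟩ := hle hJC
  obtain rfl : y = 1 := Subtype.ext hy1
  exact p.2.ne_top ((Ideal.eq_top_iff_one _).2 hy)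

end EventuallyFaithfullyFlat

section FinitePresentationOverFiniteType

variable (R : Type*) {S M : Type*} [CommRing R] [CommRing S] [Algebra R S] [AddCommGroup M]
  [Module R M] [Module S M] [IsScalarTower R S M]

lemma tmul_sub_one_tmul_smul_mem_span {Y : Set S} (hY : Algebra.adjoin R Y = ⊤) {X : Set M}
    (hX : Submodule.span R X = ⊤) (s : S) (m : M) :
    s ⊗ₜ[R] m - 1 ⊗ₜ[R] (s • m) ∈
      Submodule.span S (Set.image2 (fun y x ↦ y ⊗ₜ[R] x - 1 ⊗ₜ[R] (y • x)) Y X) := by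
  set N := Submodule.span S (Set.image2 (fun y x ↦ y ⊗ₜ[R] x - 1 ⊗ₜ[R] (y • x)) Y X)
  induction (hY ▸ Algebra.mem_top : s ∈ Algebra.adjoin R Y)
    using Algebra.adjoin_induction generalizing m with
  | mem y hy =>
    let δ : M →ₗ[R] S ⊗[R] M :=
      TensorProduct.mk R S M y - TensorProduct.mk R S M 1 ∘ₗ Algebra.lsmul R R M y
    have hδ : Submodule.span R X ≤ (N.restrictScalars R).comap δ :=
      Submodule.span_le.2 fun x hx ↦ Submodule.subset_span (Set.mem_image2_of_mem hy hx)
    exact hδ (hX ▸ Submodule.mem_top)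
  | algebraMap r => simp [Algebra.algebraMap_eq_smul_one, TensorProduct.smul_tmul]
  | add a b _ _ ha hb =>
    convert add_mem (ha m) (hb m) using 1
    simp only [add_smul, TensorProduct.tmul_add, TensorProduct.add_tmul]
    abel
  | mul a b _ _ ha hb =>
    convert add_mem (N.smul_mem a (hb m)) (ha (b • m)) using 1
    simp [smul_sub, TensorProduct.smul_tmul', mul_smul]

lemma ker_liftBaseChange_id_eq_span {Y : Set S} (hY : Algebra.adjoin R Y = ⊤) {X : Set M}
    (hX : Submodule.span R X = ⊤) :
    LinearMap.ker (LinearMap.liftBaseChange S (LinearMap.id : M →ₗ[R] M)) =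
      Submodule.span S (Set.image2 (fun y x ↦ y ⊗ₜ[R] x - 1 ⊗ₜ[R] (y • x)) Y X) := by
  set N := Submodule.span S (Set.image2 (fun y x ↦ y ⊗ₜ[R] x - 1 ⊗ₜ[R] (y • x)) Y X)
  set μ := LinearMap.liftBaseChange S (LinearMap.id : M →ₗ[R] M)
  have sub_mem_span (z : S ⊗[R] M) : z - 1 ⊗ₜ μ z ∈ N := by
    induction z with
    | zero => simp
    | tmul s m => simpa [μ] using tmul_sub_one_tmul_smul_mem_span R hY hX s m
    | add a b ha hb =>
      convert add_mem ha hb using 1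
      simp only [map_add, TensorProduct.tmul_add]
      abel
  refine le_antisymm (fun z hz ↦ ?_) (Submodule.span_le.2 ?_)
  · simpa [LinearMap.mem_ker.1 hz] using sub_mem_span z
  · rintro _ ⟨y, -, x, -, rfl⟩
    simp [μ]

theorem finitePresentation_of_restrictScalars [Algebra.FiniteType R S]
    [Module.FinitePresentation R M] : Module.FinitePresentation S M := by
  obtain ⟨Y, hY⟩ := Algebra.FiniteType.out (R := R) (A := S)
  obtain ⟨X, hX⟩ := Module.Finite.fg_top (R := R) (M := M)
  refine Module.finitePresentation_of_surjective
    (LinearMap.liftBaseChange S (LinearMap.id : M →ₗ[R] M)) (fun m ↦ ⟨1 ⊗ₜ m, by simp⟩) ?_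
  rw [ker_liftBaseChange_id_eq_span R hY hX]
  exact Submodule.fg_span (Y.finite_toSet.image2 _ X.finite_toSet)

theorem finitePresentation_of_algHom_mvPolynomial {n : ℕ} [Algebra.FiniteType R S]
    {B N : Type*} [CommRing B] [Algebra R B] [Algebra S B] [IsScalarTower R S B]
    [AddCommGroup N] [Module B N] [Module S N] [IsScalarTower S B N]
    {f : MvPolynomial (Fin n) R →ₐ[R] B}
    (hN : letI := Module.compHom N f.toRingHom
      Module.FinitePresentation (MvPolynomial (Fin n) R) N)
    (hf : ∀ i, f (.X i) ∈ Set.range (algebraMap S B)) : Module.FinitePresentation S N := by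
  choose s hs using hf
  let g : MvPolynomial (Fin n) R →ₐ[R] S := MvPolynomial.aeval s
  have f_eq : f = (IsScalarTower.toAlgHom R S B).comp g := by
    ext i
    simp [g, hs]
  let := Module.compHom N f.toRingHom
  algebraize [g.toRingHom]
  have : IsScalarTower (MvPolynomial (Fin n) R) S N := .of_algebraMap_smul fun p z ↦ by
    change g p • z = f p • z
    rw [f_eq]
    exact (algebraMap_smul B (g p) z).symm
  have : Algebra.FiniteType (MvPolynomial (Fin n) R) S := .of_restrictScalars_finiteType R _ _
  exact finitePresentation_of_restrictScalars (MvPolynomial (Fin n) R)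

end FinitePresentationOverFiniteType

theorem finitePresentation_of_faithfullyFlat (R T M : Type*) [CommRing R] [CommRing T]
    [Algebra R T] [AddCommGroup M] [Module R M] [Module.FaithfullyFlat R T]
    [Module.FinitePresentation T (T ⊗[R] M)] : Module.FinitePresentation R M := by
  have : Module.Finite R M := .of_finite_tensorProduct_of_faithfullyFlat T
  obtain ⟨n, f, hf⟩ := Module.Finite.exists_fin' R M
  refine Module.finitePresentation_of_surjective f hf (Module.Finite.iff_fg.1 ?_)
  have ker_baseChange : LinearMap.ker (f.baseChange T) =
      LinearMap.range ((LinearMap.ker f).subtype.baseChange T) := by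
    ext x
    exact lTensor_exact T (LinearMap.exact_subtype_ker_map f) hf x
  have fg_ker := Module.FinitePresentation.fg_ker (f.baseChange T) (f.lTensor_surjective T hf)
  rw [ker_baseChange, ← Module.Finite.iff_fg] at fg_ker
  have subtype_injective : Injective ((LinearMap.ker f).subtype.baseChange T) :=
    Module.Flat.lTensor_preserves_injective_linearMap _ Subtype.val_injective
  have : Module.Finite T (T ⊗[R] LinearMap.ker f) :=
    .equiv (LinearEquiv.ofInjective _ subtype_injective).symm
  exact .of_finite_tensorProduct_of_faithfullyFlat T

theorem Module.IntrinsicallyFinitePresentation.of_finitePresentation (A D B M : Type*)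
    [CommRing A] [CommRing D] [CommRing B] [Algebra A D] [Algebra A B] [Algebra D B]
    [IsScalarTower A D B] [Algebra.FinitePresentation A D] [AddCommGroup M] [Module B M]
    [Module D M] [IsScalarTower D B M] [Module.FinitePresentation D M] :
    Module.IntrinsicallyFinitePresentation A B M := by
  obtain ⟨n, f, hf, hker⟩ := Algebra.FinitePresentation.out (R := A) (A := D)
  let g := (IsScalarTower.toAlgHom A D B).comp f
  refine ⟨n, g, ?_⟩
  let := Module.compHom M g.toRingHom
  algebraize [f.toRingHom]
  have : IsScalarTower (MvPolynomial (Fin n) A) D M :=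
    .of_algebraMap_smul fun p m ↦ (algebraMap_smul B (f p) m).symm
  have : Module.FinitePresentation (MvPolynomial (Fin n) A) D :=
    Module.finitePresentation_of_surjective (Algebra.linearMap _ D) hf hker
  exact .trans (MvPolynomial (Fin n) A) M D

section Models

open Filter

universe v

lemma FGSubalgebra.eventually_mem_range_rTensor {R A S : Type*} [CommRing R] [CommRing A]
    [Algebra R A] [AddCommGroup S] [Module R S] (x : A ⊗[R] S) :
    ∀ᶠ C : FGSubalgebra R A in atTop,
      x ∈ Set.range (C.1.val.toLinearMap.rTensor S) := by
  obtain ⟨D, hD, t, rfl⟩ := TensorProduct.Algebra.exists_of_fg x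
  filter_upwards [eventually_ge_atTop ⟨D, hD⟩] with C hDC
  exact ⟨(Subalgebra.inclusion hDC).toLinearMap.rTensor S t,
    (LinearMap.rTensor_comp_apply S _ _ t).symm⟩

lemma exists_finiteType_int_model (B : Type u) (B' : Type*) [CommRing B] [CommRing B']
    [Algebra B B'] [Algebra.FinitePresentation B B'] :
    ∃ (R S : Type u) (_ : CommRing R) (_ : CommRing S) (_ : Algebra R B) (_ : Algebra R S),
      Algebra.FiniteType ℤ R ∧ Algebra.FiniteType R S ∧ Nonempty (B ⊗[R] S ≃ₐ[B] B') := by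
  obtain ⟨n, m, ⟨P⟩⟩ := Algebra.Presentation.exists_presentation_fin B B'
  exact ⟨P.Core, P.ModelOfHasCoeffs P.Core, inferInstance, inferInstance, inferInstance,
    inferInstance, inferInstance, inferInstance, ⟨P.tensorModelOfHasCoeffsEquiv P.Core⟩⟩

theorem exists_finiteType_int_faithfullyFlat_model (B : Type u) {B' : Type*} [CommRing B]
    [CommRing B'] [Algebra B B'] [Algebra.FinitePresentation B B'] [Module.FaithfullyFlat B B']
    {ι : Type*} [Finite ι] (x : ι → B') :
    ∃ (C S : Type u) (_ : CommRing C) (_ : CommRing S) (_ : Algebra C B) (_ : Algebra C S)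
      (e : B ⊗[C] S ≃ₐ[B] B'), Algebra.FiniteType ℤ C ∧ Algebra.FiniteType C S ∧
        Module.FaithfullyFlat C S ∧ ∀ i, ∃ s : S, e (1 ⊗ₜ s) = x i := by
  obtain ⟨R, S, _, _, _, _, _, _, ⟨e⟩⟩ := exists_finiteType_int_model B B'
  have : IsNoetherianRing R := Algebra.FiniteType.isNoetherianRing ℤ R
  have : Module.FaithfullyFlat B (B ⊗[R] S) := .of_linearEquiv _ _ e.toLinearEquiv
  obtain ⟨C, hC, hx⟩ := ((eventually_faithfullyFlat_tensorProduct R B S).and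
    (eventually_all.2 fun i ↦
      FGSubalgebra.eventually_mem_range_rTensor (e.symm (x i)))).exists
  let ε := Algebra.TensorProduct.cancelBaseChange R C.1 B B S
  have ε_one_tmul (z : C.1 ⊗[R] S) : ε (1 ⊗ₜ z) = C.1.val.toLinearMap.rTensor S z := by
    induction z with
    | zero => simp
    | add x y hx hy => rw [TensorProduct.tmul_add, map_add, map_add, hx, hy]
    | tmul c s => simp [ε, Algebra.smul_def]
  refine ⟨C.1, C.1 ⊗[R] S, inferInstance, inferInstance, inferInstance, inferInstance, ε.trans e,
    .trans (S := R) inferInstance inferInstance, inferInstance, hC, fun i ↦ ?_⟩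
  obtain ⟨t, ht⟩ := hx i
  exact ⟨t, by rw [AlgEquiv.trans_apply, ε_one_tmul, ht, e.apply_symm_apply]⟩

theorem exists_finitePresentation_faithfullyFlat_model (A : Type v) (B : Type u) {B' : Type*}
    [CommRing A] [CommRing B] [CommRing B'] [Algebra A B] [Algebra B B']
    [Algebra.FinitePresentation B B'] [Module.FaithfullyFlat B B']
    {ι : Type*} [Finite ι] (x : ι → B') :
    ∃ (D T : Type max u v) (_ : CommRing D) (_ : CommRing T) (_ : Algebra A D) (_ : Algebra D B)
      (_ : Algebra D T) (_ : IsScalarTower A D B) (e : B ⊗[D] T ≃ₐ[B] B'),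
      Algebra.FinitePresentation A D ∧ Algebra.FiniteType D T ∧ Module.FaithfullyFlat D T ∧
        ∀ i, ∃ t : T, e (1 ⊗ₜ t) = x i := by
  obtain ⟨C, S, _, _, _, _, e, _, _, _, hx⟩ := exists_finiteType_int_faithfullyFlat_model B x
  have : Algebra.FinitePresentation ℤ C := Algebra.FinitePresentation.of_finiteType.1 inferInstance
  let := Algebra.TensorProduct.rightAlgebra (R := ℤ) (A := A) (B := C)
  let φ : A ⊗[ℤ] C →ₐ[A] B := Algebra.TensorProduct.lift (Algebra.ofId A B)
    (algebraMap C B).toIntAlgHom fun _ _ ↦ .all _ _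
  let := φ.toRingHom.toAlgebra
  have : IsScalarTower C (A ⊗[ℤ] C) B := .of_algebraMap_eq fun c ↦ by
    change _ = φ (1 ⊗ₜ c)
    simp [φ]
  let ε := Algebra.TensorProduct.cancelBaseChange C (A ⊗[ℤ] C) B B S
  refine ⟨A ⊗[ℤ] C, (A ⊗[ℤ] C) ⊗[C] S, inferInstance, inferInstance, inferInstance, inferInstance,
    inferInstance, .of_algHom φ, ε.trans e, inferInstance, inferInstance, inferInstance,
    fun i ↦ ?_⟩
  obtain ⟨s, hs⟩ := hx i
  exact ⟨1 ⊗ₜ s, by simp [ε, Algebra.smul_def, hs]⟩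

end Models

theorem isPushout_of_algEquiv {R S A B : Type*} [CommRing R] [CommRing S] [CommRing A]
    [CommRing B] [Algebra R S] [Algebra R A] [Algebra A B] [Algebra R B] [IsScalarTower R A B]
    [Algebra S B] [IsScalarTower R S B] (e : A ⊗[R] S ≃ₐ[A] B)
    (he : ∀ s, e (1 ⊗ₜ s) = algebraMap S B s) : Algebra.IsPushout R S A B := by
  let := Algebra.TensorProduct.rightAlgebra (R := R) (A := A) (B := S)
  have : Algebra.IsPushout R A S B := .of_equiv e (RingHom.ext he)
  exact this.symm

/-- Let `A` be a commutative ring, `B` an `A`-algebra, `M` a `B`-module, and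
`B'` a `B`-algebra of finite presentation that is faithfully flat over `B` (an `A`-algebra via
composition). If `M ⊗[B] B'` (written here, following Mathlib's convention for base change, as
`B' ⊗[B] M`), viewed as a `B'`-module, is intrinsically of finite presentation over `A`, then
`M` is intrinsically of finite presentation over `A`. -/
theorem Module.IntrinsicallyFinitePresentation.of_baseChange_faithfullyFlat
    (A B B' M : Type*) [CommRing A] [CommRing B] [CommRing B'] [Algebra A B]
    [Algebra B B'] [Algebra A B'] [IsScalarTower A B B'] [Algebra.FinitePresentation B B']
    [Module.FaithfullyFlat B B']
    [AddCommGroup M] [Module B M]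
    (h : Module.IntrinsicallyFinitePresentation A B' (B' ⊗[B] M)) :
    Module.IntrinsicallyFinitePresentation A B M := by
  obtain ⟨n, f, hf⟩ := h
  obtain ⟨D, T, _, _, _, _, _, _, e, _, _, _, hT⟩ :=
    exists_finitePresentation_faithfullyFlat_model A B fun i ↦ f (.X i)
  let := Module.compHom M (algebraMap D B)
  have : IsScalarTower D B M := .of_algebraMap_smul fun _ _ ↦ rfl
  let := Algebra.compHom B' (algebraMap D B)
  have : IsScalarTower D B B' := .of_algebraMap_eq fun _ ↦ rfl
  let g : T →ₐ[D] B' :=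
    (e.toAlgHom.restrictScalars D).comp Algebra.TensorProduct.includeRight
  let := g.toRingHom.toAlgebra
  have : IsScalarTower D T B' := .of_algHom g
  let := Algebra.compHom T (algebraMap A D)
  have : IsScalarTower A D T := .of_algebraMap_eq fun _ ↦ rfl
  have : IsScalarTower A D B' := .to₁₂₄ A D B B'
  have : IsScalarTower A T B' := .to₁₃₄ A D T B'
  have : Algebra.FiniteType A T := .trans (S := D) inferInstance inferInstance
  have : Algebra.IsPushout D T B B' := isPushout_of_algEquiv e fun _ ↦ rfl
  have : Module.FinitePresentation T (B' ⊗[B] M) :=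
    finitePresentation_of_algHom_mvPolynomial A hf hT
  have : Module.FinitePresentation T (T ⊗[D] M) :=
    .of_equiv (Algebra.IsPushout.cancelBaseChange D T B B' M)
  have : Module.FinitePresentation D M := finitePresentation_of_faithfullyFlat D T M
  exact .of_finitePresentation A D B M
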